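/- For q even and for every i with 0 <= i <= q/2, there exists a set S_L of q^2 + 1 + 2i lines in PG(3,q) such that every point of PG(3,q) lies on an odd number of lines of S_L and every plane of PG(3,q) contains an odd number of lines of S_L. Consequently, there exist codewords of weight (1+q^2)(q^2+q) - 2i in the dual binary code of points and planes of Q^+(5,q) for each such i. -/

import Mathlib

/-!
Fix `d` with `X² + X + d` irreducible over `F`. Identifying `F²` with the quadratic extension gives
a regular spread of `PG(3,q)`: the line `L : x₀ = x₁ = 0` and the lines
`⟨(1, 0, t, a), (0, 1, a d, t + a)⟩` for `a, t` in `F`. For each `a`, the lines with this `a` form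
together with `L` a regulus `R_a`, and these `q` reguli pairwise meet in `L` only. Choose a set `S`
of `2i` parameters; keep `L` and the lines of `R_a` for `a ∉ S`, and replace `R_a` by its opposite
regulus for `a ∈ S`. This gives `1 + (q - 2i) q + 2i (q + 1) = q² + 1 + 2i` lines.

Incidence is governed by a dichotomy (`Pattern`). A point of `L` or a plane through `L` is incident
with `L` and with one line of each opposite regulus, hence with `2i + 1` lines. Any other point or
plane is incident with exactly one line. This is checked in coordinates (`pattern_of_point_eqs`,
`pattern_of_plane_eqs`): the equations determining the parameters `(a, t)` of the spread line
incident with a given element form a linear system whose determinant is a value of the anisotropic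
norm form `x² + x y + d y²`.

For the code, the Klein images of the lines are written down explicitly and the dichotomy is proved
for the generators of `Q⁺(5,q)` directly (`pattern_generator`), which avoids identifying generators
with points and planes of `PG(3,q)`. The image of the spread is an elliptic quadric in a solid, the
image of `R_a` is a conic of it, and the image of the opposite regulus is the conic in the perp of
the plane of the former. A generator `W` has a point in the solid for dimension reasons; since `W`
equals its own perp, when `W` meets the plane of the conic of `R_a` it also meets the perp of that
plane (`IsGenerator.exists_mem_orth`). Uniqueness holds because points of `W` are pairwise
perpendicular, while distinct points of the elliptic quadric, or of one opposite conic, are not.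

The codeword is the characteristic function of the complement of the set of Klein images. A
generator has `q² + q + 1` points, an odd number, and contains an odd number of Klein images, so it
meets the complement in an even number of points. The quadric has `(q² + 1)(q² + q + 1)` points
(`card_Q5Point`), which gives the weight.
-/

open scoped Classical

noncomputable section

variable (F : Type*) [Field F] [Fintype F]

/-- Points of `PG(3,q)`: one-dimensional subspaces of `F^4`. -/
def PGPoint := {W : Submodule F (Fin 4 → F) // Module.finrank F W = 1}

/-- Lines of `PG(3,q)`: two-dimensional subspaces of `F^4`. -/
def PGLine := {W : Submodule F (Fin 4 → F) // Module.finrank F W = 2}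

/-- Planes of `PG(3,q)`: three-dimensional subspaces of `F^4`. -/
def PGPlane := {W : Submodule F (Fin 4 → F) // Module.finrank F W = 3}

/-- The standard hyperbolic quadratic form `x₀x₁ + x₂x₃ + x₄x₅` on `F^6`,
defining the Klein quadric `Q⁺(5,q)`. -/
def Q5Form : (Fin 6 → F) → F := fun v => v 0 * v 1 + v 2 * v 3 + v 4 * v 5

/-- Points of `Q⁺(5,q)`. -/
def Q5Point := {W : Submodule F (Fin 6 → F) //
  Module.finrank F W = 1 ∧ ∀ v ∈ W, Q5Form F v = 0}

/-- Planes (generators) of `Q⁺(5,q)`: totally singular 3-dimensional subspaces. -/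
def Q5Plane := {W : Submodule F (Fin 6 → F) //
  Module.finrank F W = 3 ∧ ∀ v ∈ W, Q5Form F v = 0}

/-! ### The index set and the two incidence patterns -/

/-- Index set of the lines constructed from a set `S` of parameters `a : K`: `none` is the special
line `L`, the pair `(a, t)` with `a ∉ S` and `t : K` is a line other than `L` of the regulus `R_a`,
and the pair `(a, m)` with `a ∈ S` and `m : Option K` (a point of the projective line) is a line of
the regulus opposite to `R_a`. -/
abbrev Idx {K : Type*} (S : Finset K) : Type _ :=
  Option (({a // a ∉ S} × K) ⊕ ({a // a ∈ S} × Option K))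

lemma card_idx {K : Type*} [Fintype K] (S : Finset K) :
    Nat.card (Idx S) = Fintype.card K ^ 2 + 1 + S.card := by
  have h1 : Fintype.card {a // a ∉ S} + S.card = Fintype.card K := by
    rw [Fintype.card_subtype_compl, Fintype.card_coe]
    exact Nat.sub_add_cancel S.card_le_univ
  simp only [Nat.card_eq_fintype_card, Idx, Fintype.card_option, Fintype.card_sum,
    Fintype.card_prod, Fintype.card_coe]
  rw [← h1]; ring

/-- The two ways in which a point, a plane, or a generator of the Klein quadric can be incident
with the lines of the construction, `Q j` meaning incidence with the line `j`. If it is incident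
with `L`, then it is incident with no line of a regulus `R_a`, `a ∉ S`, and with exactly one line
of each opposite regulus. Otherwise it is incident with no line except those of a single value
`a₀` of the parameter, and with exactly one of these; both types of lines are described with
`a₀` in `K`, so that this is one statement whether or not `a₀ ∈ S`. -/
def Pattern {K : Type*} (S : Finset K) (Q : Idx S → Prop) : Prop :=
  (Q none ∧ (∀ a t, ¬ Q (some (.inl (a, t)))) ∧
    ∃ m₀, ∀ a m, Q (some (.inr (a, m))) ↔ m = m₀) ∨
  (¬ Q none ∧ ∃ (a₀ t₀ : K) (m₀ : Option K),
    (∀ a t, Q (some (.inl (a, t))) ↔ a.1 = a₀ ∧ t = t₀) ∧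
    (∀ a m, Q (some (.inr (a, m))) ↔ a.1 = a₀ ∧ m = m₀))

/-- The number of incidences is `1 + |S|` in the first pattern and `1` in the second. -/
lemma Pattern.odd_ncard {K : Type*} [Fintype K] {S : Finset K} (hS : Even S.card)
    {Q : Idx S → Prop} (h : Pattern S Q) : Odd {x | Q x}.ncard := by
  rcases h with ⟨h0, h1, m₀, h2⟩ | ⟨h0, a₀, t₀, m₀, h1, h2⟩
  · have : {x | Q x} = insert none
        ((fun a : {a // a ∈ S} => (some (.inr (a, m₀)) : Idx S)) '' Set.univ) := by
      ext x
      rcases x with _ | ⟨a, t⟩ | ⟨a, m⟩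
      · simp [h0]
      · simp [h1]
      · simp [h2, eq_comm]
    rw [this, Set.ncard_insert_of_notMem (by simp),
      Set.ncard_image_of_injective _ (fun a b hab => by simpa using hab), Set.ncard_univ]
    simpa using hS.add_one
  · by_cases ha : a₀ ∈ S
    · have : {x | Q x} = {some (.inr (⟨a₀, ha⟩, m₀))} := by
        ext x
        rcases x with _ | ⟨⟨a, h⟩, t⟩ | ⟨⟨a, h⟩, m⟩
        · simp [h0]
        · simp only [Set.mem_ofPred_eq, h1]; simp; rintro rfl; exact absurd ha h
        · simp [h2]
      simp [this]
    · have : {x | Q x} = {some (.inl (⟨a₀, ha⟩, t₀))} := by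
        ext x
        rcases x with _ | ⟨⟨a, h⟩, t⟩ | ⟨⟨a, h⟩, m⟩
        · simp [h0]
        · simp [h1]
        · simp only [Set.mem_ofPred_eq, h2]; simp; rintro rfl; exact absurd h ha
      simp [this]

/-! ### The lines of `PG(3,q)` in coordinates -/

section coords
variable {K : Type*} [Field K]

/-- First spanning vector of the line with a given index. The line `L` is `x₀ = x₁ = 0`, and the
line `(a, t)` of the spread is the row space of `(I | M)` with `M = !![t, a; a * d, t + a]`. These
matrices form a field when `X² + X + d` is irreducible, so that the spread is regular; the matrices
with `a` fixed give the regulus `R_a` through `L`. -/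
def lineE (S : Finset K) : Idx S → Fin 4 → K
  | none => ![0, 0, 1, 0]
  | some (.inl (a, t)) => ![1, 0, t, a]
  | some (.inr (_, some m)) => ![0, 0, m, 1]
  | some (.inr (_, none)) => ![0, 0, 1, 0]

/-- Second spanning vector of the line with a given index. -/
def lineF (S : Finset K) (d : K) : Idx S → Fin 4 → K
  | none => ![0, 0, 0, 1]
  | some (.inl (a, t)) => ![0, 1, a * d, t + a]
  | some (.inr (a, some m)) => ![m, 1, a * d, a * m + a]
  | some (.inr (a, none)) => ![1, 0, 0, a]

/-- The norm form of the quadratic extension defined by `X² + X + d` is anisotropic. -/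
lemma norm_ne_zero {d : K} (hd : ∀ x : K, x ^ 2 + x + d ≠ 0) {x y : K}
    (h : ¬ (x = 0 ∧ y = 0)) : x ^ 2 + x * y + d * y ^ 2 ≠ 0 := by
  intro h0
  by_cases hy : y = 0
  · subst hy; simp at h0; exact h ⟨h0, rfl⟩
  · apply hd (x / y); field_simp; linear_combination h0

/-- The incidence equations of the point `(x, y, z, w)` with the lines of the construction have
their solutions in one of the two patterns. -/
lemma pattern_of_point_eqs {S : Finset K} {d : K} (h2 : (2 : K) = 0)
    (hd : ∀ x : K, x ^ 2 + x + d ≠ 0) {x y z w : K}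
    (hp : ¬ (x = 0 ∧ y = 0 ∧ z = 0 ∧ w = 0)) {Q : Idx S → Prop}
    (q0 : Q none ↔ x = 0 ∧ y = 0)
    (q1 : ∀ a t, Q (some (.inl (a, t))) ↔
      z = t * x + a * d * y ∧ w = a * x + (t + a) * y)
    (q2 : ∀ a m, Q (some (.inr (a, some m))) ↔
      x = m * y ∧ z - a * d * y = m * (w - a * x - a * y))
    (q3 : ∀ a, Q (some (.inr (a, none))) ↔ y = 0 ∧ w = a * x) : Pattern S Q := by
  by_cases hxy : x = 0 ∧ y = 0
  · obtain ⟨rfl, rfl⟩ := hxy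
    left
    refine ⟨q0.2 ⟨rfl, rfl⟩, fun a t h => ?_, if w = 0 then none else some (z / w), fun a m => ?_⟩
    · rw [q1] at h; grind
    · rcases m with _ | m
      · rw [q3]; grind
      · rw [q2]; split_ifs with hw
        · grind
        · simp [eq_div_iff hw, eq_comm]
  · right
    -- The two equations of a spread line are linear in `(a, t)`, with the nonzero norm of `(x, y)`
    -- as determinant; `a₀` and `t₀` are given by Cramer's rule.
    have hN := norm_ne_zero hd hxy
    refine ⟨fun h => hxy (q0.1 h), (x * w + y * z) / (x ^ 2 + x * y + d * y ^ 2),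
      (z * (x + y) + d * y * w) / (x ^ 2 + x * y + d * y ^ 2),
      if y = 0 then none else some (x / y), fun a t => ?_, fun a m => ?_⟩
    · rw [q1, eq_div_iff hN, eq_div_iff hN]
      constructor
      · rintro ⟨e, f⟩
        exact ⟨by linear_combination -x * f - y * e - t * x * y * h2,
          by linear_combination -(x + y) * e - d * y * f - (a * d * x * y + a * d * y ^ 2) * h2⟩
      · rintro ⟨e, f⟩
        exact ⟨mul_left_cancel₀ hN
            (by linear_combination -x * f - d * y * e - d * x * y * w * h2),
          mul_left_cancel₀ hN
            (by linear_combination -x * e - y * f - y * e - (x * y * z + y ^ 2 * z) * h2)⟩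
    · rcases m with _ | m
      · rw [q3, eq_div_iff hN]
        by_cases hy : y = 0
        · subst hy
          have hx : x ≠ 0 := fun h => hxy ⟨h, rfl⟩
          simp only [true_and, if_true, and_true]
          exact ⟨fun h => by rw [h]; ring, fun h => mul_left_cancel₀ hx (by linear_combination -h)⟩
        · simp [hy]
      · rw [q2, eq_div_iff hN]
        clear q0 q1 q2 q3
        split_ifs with hy
        · grind
        · simp only [Option.some.injEq, eq_div_iff hy]
          constructor
          · rintro ⟨rfl, e⟩
            exact ⟨by linear_combination -y * e +
              (a * m ^ 2 * y ^ 2 + a * m * y ^ 2 - m * y * w) * h2, rfl⟩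
          · rintro ⟨e, rfl⟩
            exact ⟨rfl, mul_left_cancel₀ hy (by linear_combination -e +
              (a * m ^ 2 * y ^ 2 + a * m * y ^ 2 - m * y * w) * h2)⟩

/-- The equations saying that the plane `x X₀ + y X₁ + z X₂ + w X₃ = 0` contains a line of the
construction have their solutions in one of the two patterns. -/
lemma pattern_of_plane_eqs {S : Finset K} {d : K} (h2 : (2 : K) = 0)
    (hd : ∀ x : K, x ^ 2 + x + d ≠ 0) {x y z w : K}
    (hu : ¬ (x = 0 ∧ y = 0 ∧ z = 0 ∧ w = 0)) {Q : Idx S → Prop}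
    (q0 : Q none ↔ w = 0 ∧ z = 0)
    (q1 : ∀ a t, Q (some (.inl (a, t))) ↔
      x + z * t + w * a = 0 ∧ y + z * (a * d) + w * (t + a) = 0)
    (q2 : ∀ a m, Q (some (.inr (a, some m))) ↔
      z * m + w = 0 ∧ x * m + y + z * (a * d) + w * (a * m + a) = 0)
    (q3 : ∀ a, Q (some (.inr (a, none))) ↔ z = 0 ∧ x + w * a = 0) : Pattern S Q := by
  by_cases hzw : w = 0 ∧ z = 0
  · obtain ⟨rfl, rfl⟩ := hzw
    left
    refine ⟨q0.2 ⟨rfl, rfl⟩, fun a t h => ?_, if x = 0 then none else some (y / x), fun a m => ?_⟩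
    · rw [q1] at h; grind
    · rcases m with _ | m
      · rw [q3]; grind
      · rw [q2]; split_ifs with hw
        · grind
        · simp only [Option.some.injEq, eq_div_iff hw]
          exact ⟨fun h => by linear_combination h.2 - y * h2,
            fun h => ⟨by ring, by linear_combination h + y * h2⟩⟩
  · right
    -- Again Cramer's rule gives `a₀` and `t₀`; the determinant is the norm of `(w, z)`.
    have hN := norm_ne_zero hd hzw
    refine ⟨fun h => hzw (q0.1 h), (z * y + w * x) / (w ^ 2 + w * z + d * z ^ 2),
      (x * (d * z + w) + w * y) / (w ^ 2 + w * z + d * z ^ 2),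
      if z = 0 then none else some (w / z), fun a t => ?_, fun a m => ?_⟩
    · rw [q1, eq_div_iff hN, eq_div_iff hN]
      constructor
      · rintro ⟨e, f⟩
        exact ⟨by linear_combination z * f + w * e - (z * y + w * x + z * w * t) * h2,
          by linear_combination (d * z + w) * e + w * f -
            (x * (d * z + w) + w * y + d * z * w * a + w ^ 2 * a) * h2⟩
      · rintro ⟨e, f⟩
        exact ⟨(mul_eq_zero_iff_left hN).1 (by linear_combination z * f + w * e +
            (x * (w ^ 2 + w * z + d * z ^ 2) + w * y * z) * h2),
          (mul_eq_zero_iff_left hN).1 (by linear_combination d * z * e + w * f + w * e +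
            (y * (w ^ 2 + w * z + d * z ^ 2) + d * z * w * x + w ^ 2 * x) * h2)⟩
    · rcases m with _ | m
      · rw [q3, eq_div_iff hN]
        by_cases hz : z = 0
        · subst hz
          have hw : w ≠ 0 := fun h => hzw ⟨h, rfl⟩
          simp only [true_and, if_true, and_true]
          exact ⟨fun h => by linear_combination w * h - w * x * h2,
            fun h => (mul_eq_zero_iff_left hw).1 (by linear_combination h + w * x * h2)⟩
        · simp [hz]
      · rw [q2, eq_div_iff hN]
        clear q0 q1 q2 q3
        split_ifs with hy
        · grind
        · simp only [Option.some.injEq, eq_div_iff hy]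
          constructor
          · rintro ⟨e, f⟩
            obtain rfl : w = m * z := by linear_combination e - m * z * h2
            exact ⟨by linear_combination z * f - (z * y + m * z * x) * h2, rfl⟩
          · rintro ⟨e, rfl⟩
            exact ⟨by linear_combination m * z * h2, (mul_eq_zero_iff_left hy).1
              (by linear_combination e + (z * y + m * z * x) * h2)⟩

lemma pattern_point {S : Finset K} {d : K} (h2 : (2 : K) = 0) (hd : ∀ x : K, x ^ 2 + x + d ≠ 0)
    {p : Fin 4 → K} (hp : p ≠ 0) :
    Pattern S (fun i => p ∈ Submodule.span K {lineE S i, lineF S d i}) := by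
  have hmem : ∀ e f : Fin 4 → K, p ∈ Submodule.span K {e, f} ↔ ∃ a b : K,
      a * e 0 + b * f 0 = p 0 ∧ a * e 1 + b * f 1 = p 1 ∧
      a * e 2 + b * f 2 = p 2 ∧ a * e 3 + b * f 3 = p 3 := by
    intro e f
    simp [Submodule.mem_span_pair, funext_iff, Fin.forall_fin_succ]
  have hp' : ¬ (p 0 = 0 ∧ p 1 = 0 ∧ p 2 = 0 ∧ p 3 = 0) := by
    rintro ⟨h0, h1, h2, h3⟩; apply hp; ext j; fin_cases j <;> assumption
  refine pattern_of_point_eqs h2 hd hp' ?_ ?_ ?_ ?_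
  · rw [hmem]; simp [lineE, lineF]; grind
  · intro a t; rw [hmem]; simp [lineE, lineF]; grind
  · intro a m; rw [hmem]; simp only [lineE, lineF]
    generalize p 0 = x at *
    generalize p 1 = y at *
    generalize p 2 = z at *
    generalize p 3 = w at *
    constructor
    · rintro ⟨b, c, h⟩
      simp at h
      grind
    · rintro ⟨h, h'⟩
      refine ⟨w - (a : K) * x - (a : K) * y, y, ?_⟩
      simp
      exact ⟨by linear_combination -h, by linear_combination -h', by linear_combination -(a : K) * h⟩
  · intro a; rw [hmem]; simp [lineE, lineF]; grind

lemma pattern_plane {S : Finset K} {d : K} (h2 : (2 : K) = 0) (hd : ∀ x : K, x ^ 2 + x + d ≠ 0)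
    {φ : Module.Dual K (Fin 4 → K)} (hφ : φ ≠ 0) :
    Pattern S (fun i => φ (lineE S i) = 0 ∧ φ (lineF S d i) = 0) := by
  obtain ⟨x, y, z, w, h⟩ : ∃ x y z w : K, ∀ v, φ v = x * v 0 + y * v 1 + z * v 2 + w * v 3 := by
    refine ⟨φ fun j => if 0 = j then 1 else 0, φ fun j => if 1 = j then 1 else 0,
      φ fun j => if 2 = j then 1 else 0, φ fun j => if 3 = j then 1 else 0, fun v => ?_⟩
    rw [LinearMap.pi_apply_eq_sum_univ φ v]
    simp [Fin.sum_univ_four, mul_comm]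
  refine pattern_of_plane_eqs (x := x) (y := y) (z := z) (w := w) h2 hd ?_ ?_ ?_ ?_ ?_
  · rintro ⟨rfl, rfl, rfl, rfl⟩
    exact hφ (LinearMap.ext fun v => by simp [h])
  all_goals simp [h, lineE, lineF, and_comm]

end coords

/-! ### Points of the Klein quadric and its generators -/

section klein
variable {K : Type*} [Field K]

/-- The polar form of the quadratic form `x₀x₁ + x₂x₃ + x₄x₅`. -/
def polarQ : LinearMap.BilinForm K (Fin 6 → K) :=
  LinearMap.mk₂ K (fun v w => v 0 * w 1 + v 1 * w 0 + v 2 * w 3 + v 3 * w 2 + v 4 * w 5 + v 5 * w 4)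
    (fun _ _ _ => by simp only [Pi.add_apply]; ring)
    (fun _ _ _ => by simp only [Pi.smul_apply, smul_eq_mul]; ring)
    (fun _ _ _ => by simp only [Pi.add_apply]; ring)
    (fun _ _ _ => by simp only [Pi.smul_apply, smul_eq_mul]; ring)

lemma polarQ_apply (v w : Fin 6 → K) : polarQ v w =
    v 0 * w 1 + v 1 * w 0 + v 2 * w 3 + v 3 * w 2 + v 4 * w 5 + v 5 * w 4 := rfl

lemma polarQ_isRefl : (polarQ (K := K)).IsRefl := fun v w h => by
  rw [polarQ_apply] at h ⊢; linear_combination h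

lemma polarQ_nondegenerate : (polarQ (K := K)).Nondegenerate := by
  refine (LinearMap.IsRefl.nondegenerate_iff_separatingLeft (R := K) (M := Fin 6 → K) (M₁ := K) (B := polarQ)
    polarQ_isRefl).2 fun v h => ?_
  have h0 := h (Pi.single 0 1)
  have h1 := h (Pi.single 1 1)
  have h2 := h (Pi.single 2 1)
  have h3 := h (Pi.single 3 1)
  have h4 := h (Pi.single 4 1)
  have h5 := h (Pi.single 5 1)
  simp [polarQ_apply] at h0 h1 h2 h3 h4 h5
  ext j; fin_cases j <;> simpa

/-- A generator of the Klein quadric: a totally singular subspace of vector dimension three. -/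
def IsGenerator (W : Submodule K (Fin 6 → K)) : Prop :=
  Module.finrank K W = 3 ∧ ∀ v ∈ W, v 0 * v 1 + v 2 * v 3 + v 4 * v 5 = 0

lemma IsGenerator.polar_eq_zero {W : Submodule K (Fin 6 → K)} (hW : IsGenerator W)
    {v w : Fin 6 → K} (hv : v ∈ W) (hw : w ∈ W) : polarQ v w = 0 := by
  have h1 := hW.2 _ hv
  have h2 := hW.2 _ hw
  have h3 := hW.2 _ (W.add_mem hv hw)
  simp only [Pi.add_apply] at h3
  rw [polarQ_apply]
  linear_combination h3 - h1 - h2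

lemma finrank_orth (X : Submodule K (Fin 6 → K)) :
    Module.finrank K (polarQ.orthogonal X) = 6 - Module.finrank K X := by
  rw [LinearMap.BilinForm.finrank_orthogonal polarQ_nondegenerate, Module.finrank_fin_fun]

/-- A generator is its own perp, being totally isotropic of half the dimension. -/
lemma IsGenerator.orth_eq {W : Submodule K (Fin 6 → K)} (hW : IsGenerator W) :
    polarQ.orthogonal W = W := by
  refine (Submodule.eq_of_le_of_finrank_eq (fun v hv => ?_) ?_).symm
  · rw [LinearMap.BilinForm.mem_orthogonal_iff]
    exact fun w hw => hW.polar_eq_zero hw hv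
  · rw [finrank_orth, hW.1]

/-- If a generator meets a projective plane `C`, then it also meets the perp of `C`: since `W`
equals its perp, `W ∩ C^⊥` is the perp of `W + C`, which is not the whole space. -/
lemma IsGenerator.exists_mem_orth {W C : Submodule K (Fin 6 → K)} (hW : IsGenerator W)
    (hC : Module.finrank K C ≤ 3) {v : Fin 6 → K} (hv : v ≠ 0) (hvW : v ∈ W) (hvC : v ∈ C) :
    ∃ y ∈ W, y ≠ 0 ∧ ∀ c ∈ C, polarQ c y = 0 := by
  have h1 : 0 < Module.finrank K ↥(W ⊓ C) :=
    Module.finrank_pos_iff_exists_ne_zero.2 ⟨⟨v, hvW, hvC⟩, fun h => hv (congrArg Subtype.val h)⟩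
  have h2 := Submodule.finrank_sup_add_finrank_inf_eq W C
  have h3 : 0 < Module.finrank K (polarQ.orthogonal (W ⊔ C)) := by
    rw [finrank_orth]; have := hW.1; omega
  obtain ⟨⟨y, hy⟩, hy0⟩ := Module.finrank_pos_iff_exists_ne_zero.1 h3
  rw [LinearMap.BilinForm.mem_orthogonal_iff] at hy
  refine ⟨y, ?_, by simpa using hy0, fun c hc => hy c (Submodule.mem_sup_right hc)⟩
  rw [← hW.orth_eq, LinearMap.BilinForm.mem_orthogonal_iff]
  exact fun w hw => hy w (Submodule.mem_sup_left hw)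

/-- The Klein image of the line `L`. Here and below the coordinates on the Klein quadric are the
Plücker coordinates `(p₀₁, p₂₃, p₁₂, p₀₃, p₀₂, p₁₃)`, in characteristic two. -/
def ptInf : Fin 6 → K := ![0, 1, 0, 0, 0, 0]

/-- The Klein image of the spread line `(a, t)`. Together with `ptInf` these points form the
elliptic quadric cut out by the solid `x₄ = d x₅`, `x₃ = x₂ + x₅`; for `a` fixed they form, with
`ptInf`, the conic in the plane `x₅ = a x₀` of that solid. -/
def ptU (d a t : K) : Fin 6 → K := ![1, t ^ 2 + t * a + d * a ^ 2, t, t + a, a * d, a]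

/-- The Klein images of the lines of the regulus opposite to `R_a`. They form the conic in which
the Klein quadric meets the perp of the plane of the conic of `R_a`. -/
def ptN (d a : K) : Option K → Fin 6 → K
  | some m => ![0, a * (m ^ 2 + m + d), m, m, m ^ 2, 1]
  | none => ![0, a, 0, 0, 1, 0]

/-- A generator meeting the plane of the conic of `R_a` contains a point of the opposite conic. -/
lemma IsGenerator.exists_ptN_mem (h2 : (2 : K) = 0) {W : Submodule K (Fin 6 → K)}
    (hW : IsGenerator W) (d a : K) {v : Fin 6 → K} (hv : v ≠ 0) (hvW : v ∈ W)
    (e5 : v 5 = a * v 0) (e4 : v 4 = a * d * v 0) (e3 : v 3 = v 2 + a * v 0) :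
    ∃ m, ptN d a m ∈ W := by
  -- a basis of the plane of the conic of `R_a`
  let b : Fin 3 → Fin 6 → K := ![![1, 0, 0, a, a * d, a], ![0, 1, 0, 0, 0, 0], ![0, 0, 1, 1, 0, 0]]
  have hvC : v ∈ Submodule.span K (Set.range b) := by
    rw [Submodule.mem_span_range_iff_exists_fun]
    refine ⟨![v 0, v 1, v 2], ?_⟩
    ext j
    fin_cases j <;> simp [b, Fin.sum_univ_three, e5, e4, e3] <;> ring
  obtain ⟨y, hyW, hy0, hy⟩ := hW.exists_mem_orth
    ((finrank_range_le_card b).trans (by simp)) hv hvW hvC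
  have c0 := hy (b 0) (Submodule.subset_span ⟨0, rfl⟩)
  have c1 := hy (b 1) (Submodule.subset_span ⟨1, rfl⟩)
  have c2 := hy (b 2) (Submodule.subset_span ⟨2, rfl⟩)
  have hQ := hW.2 y hyW
  simp [polarQ_apply, b] at c0 c1 c2
  have e3 : y 3 = y 2 := by linear_combination c2 - y 2 * h2
  have e1 : y 1 = a * (y 2 + y 4 + d * y 5) := by
    linear_combination c0 - a * (y 2 + y 4 + d * y 5) * h2
  have hs : y 2 ^ 2 = y 4 * y 5 := by
    rw [c1, e3] at hQ; linear_combination hQ - y 4 * y 5 * h2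
  by_cases h5 : y 5 = 0
  · have e2 : y 2 = 0 := by simpa [h5] using hs
    have e4 : y 4 ≠ 0 := by
      intro h4; apply hy0; ext j; fin_cases j <;> simp [c1, e1, e2, e3, h4, h5]
    refine ⟨none, (W.smul_mem_iff e4).1 ?_⟩
    convert hyW using 1
    ext j; fin_cases j <;> simp [ptN, c1, e1, e2, e3, h5, mul_comm]
  · refine ⟨some (y 2 / y 5), (W.smul_mem_iff h5).1 ?_⟩
    convert hyW using 1
    have e4 : y 4 = y 2 ^ 2 / y 5 := by rw [hs]; field_simp
    ext j; fin_cases j <;> simp [ptN, c1, e1, e3, e4] <;> field_simp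
    ring

lemma eq_of_polar_ptN (h2 : (2 : K) = 0) {d a b : K} {m n : Option K}
    (h : polarQ (ptN d a m) (ptN d b n) = 0) : m = n := by
  rcases m with _ | m <;> rcases n with _ | n <;> simp [polarQ_apply, ptN] at h ⊢
  have : (m - n) ^ 2 = 0 := by linear_combination h - 2 * m * n * h2
  exact sub_eq_zero.1 (pow_eq_zero_iff two_ne_zero |>.1 this)

lemma eq_of_polar_ptU (h2 : (2 : K) = 0) {d a b t s : K} (hd : ∀ x : K, x ^ 2 + x + d ≠ 0)
    (h : polarQ (ptU d a t) (ptU d b s) = 0) : a = b ∧ t = s := by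
  by_contra hne
  refine norm_ne_zero hd (x := t - s) (y := a - b) ?_ ?_
  · rw [sub_eq_zero, sub_eq_zero]; tauto
  · simp [polarQ_apply, ptU] at h
    linear_combination h - (2 * t * s + t * b + a * s + 2 * a * b * d) * h2

lemma eq_of_polar_ptU_ptN (h2 : (2 : K) = 0) {d a b t : K} {m : Option K}
    (hd : ∀ x : K, x ^ 2 + x + d ≠ 0)
    (h : polarQ (ptU d a t) (ptN d b m) = 0) : b = a := by
  rcases m with _ | m <;> simp [polarQ_apply, ptU, ptN] at h
  · linear_combination h - a * h2
  · refine mul_right_cancel₀ (hd m) ?_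
    linear_combination h - (t * m + a * (m ^ 2 + m + d)) * h2

/-- A vector spanning the Klein image of the line with a given index. -/
def kleinPt (S : Finset K) (d : K) : Idx S → Fin 6 → K
  | none => ptInf
  | some (.inl (a, t)) => ptU d a t
  | some (.inr (a, m)) => ptN d a m

/-- Two points of the Klein quadric in a common generator are perpendicular. As distinct points of
the elliptic quadric or of one opposite conic are never perpendicular, and neither is `ptU d a t`
to a point of an opposite conic with parameter `b ≠ a`, the parameters are unique; existence comes from a dimension count and from `exists_ptN_mem`. -/
lemma pattern_generator {S : Finset K} {d : K} (h2 : (2 : K) = 0)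
    (hd : ∀ x : K, x ^ 2 + x + d ≠ 0) {W : Submodule K (Fin 6 → K)} (hW : IsGenerator W) :
    Pattern S (fun i => kleinPt S d i ∈ W) := by
  by_cases hinf : (ptInf : Fin 6 → K) ∈ W
  · left
    have hN : ∀ a, ∃ m, ptN d a m ∈ W := fun a =>
      hW.exists_ptN_mem h2 d a (v := ptInf)
        (fun h => by simpa [ptInf] using congrFun h 1) hinf
        (by simp [ptInf]) (by simp [ptInf]) (by simp [ptInf])
    obtain ⟨m₀, hm₀⟩ := hN 0
    refine ⟨hinf, fun a t h => ?_, m₀, fun a m => ⟨fun h => ?_, ?_⟩⟩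
    · have := hW.polar_eq_zero hinf h
      simp [polarQ_apply, ptInf, ptU, kleinPt] at this
    · exact eq_of_polar_ptN h2 (hW.polar_eq_zero h hm₀)
    · rintro rfl
      obtain ⟨n, hn⟩ := hN a
      rwa [eq_of_polar_ptN h2 (hW.polar_eq_zero hm₀ hn)]
  · right
    -- A generator has vector dimension three, so it meets the solid of the elliptic quadric, which
    -- is the kernel of two linear forms.
    obtain ⟨v, hvW, hv0, e4, e3⟩ : ∃ v ∈ W, v ≠ 0 ∧ v 4 = d * v 5 ∧ v 3 = v 2 + v 5 := by
      let f : (Fin 6 → K) →ₗ[K] (Fin 2 → K) := Matrix.toLin' !![0, 0, 0, 0, 1, -d; 0, 0, -1, 1, 0, -1]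
      have hk : LinearMap.ker (f ∘ₗ W.subtype) ≠ ⊥ :=
        LinearMap.ker_ne_bot_of_finrank_lt (by rw [hW.1]; simp)
      obtain ⟨⟨v, hvW⟩, hv, hv0⟩ := Submodule.exists_mem_ne_zero_of_ne_bot hk
      have e0 := congrFun (LinearMap.mem_ker.1 hv) 0
      have e1 := congrFun (LinearMap.mem_ker.1 hv) 1
      simp [f, Matrix.toLin'_apply, Matrix.mulVec, dotProduct, Fin.sum_univ_succ] at e0 e1
      refine ⟨v, hvW, by simpa using hv0, ?_, ?_⟩
      · linear_combination e0
      · linear_combination e1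
    have hQ := hW.2 v hvW
    rw [e4, e3] at hQ
    -- On the elliptic quadric, only `ptInf` has vanishing coordinate `x₀`.
    have hv0' : v 0 ≠ 0 := by
      intro h0
      have h25 : v 2 = 0 ∧ v 5 = 0 := by
        by_contra hne
        exact norm_ne_zero hd hne (by rw [h0] at hQ; linear_combination hQ)
      have h1 : v 1 ≠ 0 := by
        intro h1; apply hv0; ext j; fin_cases j <;> simp [h0, h1, h25, e3, e4]
      refine hinf ((W.smul_mem_iff h1).1 ?_)
      convert hvW using 1
      ext j; fin_cases j <;> simp [ptInf, h0, h25, e3, e4]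
    have hU : ptU d (v 5 / v 0) (v 2 / v 0) ∈ W := by
      refine (W.smul_mem_iff hv0').1 ?_
      convert hvW using 1
      have e1 : v 1 = (v 2 ^ 2 + v 2 * v 5 + d * v 5 ^ 2) / v 0 := by
        rw [eq_div_iff hv0']
        linear_combination hQ - (v 2 ^ 2 + v 2 * v 5 + d * v 5 ^ 2) * h2
      ext j; fin_cases j <;> simp [ptU, e1, e3, e4] <;> field_simp
    obtain ⟨m₀, hm₀⟩ := hW.exists_ptN_mem h2 d (v 5 / v 0) hv0 hvW
      (by field_simp) (by rw [e4]; field_simp) (by rw [e3]; field_simp)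
    refine ⟨hinf, v 5 / v 0, v 2 / v 0, m₀, fun a t => ⟨fun h => ?_, ?_⟩,
      fun a m => ⟨fun h => ?_, ?_⟩⟩
    · exact eq_of_polar_ptU h2 hd (hW.polar_eq_zero h hU)
    · rintro ⟨h, rfl⟩
      simpa only [kleinPt, h] using hU
    · exact ⟨eq_of_polar_ptU_ptN h2 hd (hW.polar_eq_zero hU h),
        eq_of_polar_ptN h2 (hW.polar_eq_zero h hm₀)⟩
    · rintro ⟨h, rfl⟩
      simpa only [kleinPt, h] using hm₀

lemma kleinPt_ne_zero {S : Finset K} {d : K} (i : Idx S) : kleinPt S d i ≠ 0 := by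
  intro h
  have h0 := congrFun h 0
  have h1 := congrFun h 1
  have h4 := congrFun h 4
  have h5 := congrFun h 5
  rcases i with _ | ⟨a, t⟩ | ⟨a, _ | m⟩ <;>
    simp [kleinPt, ptInf, ptU, ptN] at h0 h1 h4 h5

lemma kleinPt_singular {S : Finset K} {d : K} (h2 : (2 : K) = 0) (i : Idx S) :
    kleinPt S d i 0 * kleinPt S d i 1 + kleinPt S d i 2 * kleinPt S d i 3 +
      kleinPt S d i 4 * kleinPt S d i 5 = 0 := by
  rcases i with _ | ⟨a, t⟩ | ⟨a, _ | m⟩ <;> simp [kleinPt, ptInf, ptU, ptN]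
  · linear_combination (t ^ 2 + t * a + d * a ^ 2) * h2
  · linear_combination m ^ 2 * h2

lemma eq_of_kleinPt_smul {S : Finset K} {d : K} (hd : ∀ x : K, x ^ 2 + x + d ≠ 0) {i j : Idx S}
    {c : K} (h : kleinPt S d j = c • kleinPt S d i) : i = j := by
  have h0 := congrFun h 0
  have h1 := congrFun h 1
  have h2 := congrFun h 2
  have h4 := congrFun h 4
  have h5 := congrFun h 5
  rcases i with _ | ⟨⟨a, ha⟩, t⟩ | ⟨⟨a, ha⟩, _ | m⟩ <;>
    rcases j with _ | ⟨⟨b, hb⟩, s⟩ | ⟨⟨b, hb⟩, _ | n⟩ <;>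
    simp [kleinPt, ptInf, ptU, ptN, Subtype.ext_iff] at h0 h1 h2 h4 h5 ⊢
  all_goals grind
end klein

/-! ### The set of lines -/

lemma Pattern.eq_of {K : Type*} {S : Finset K} {Q : Idx S → Prop} (h : Pattern S Q) (h0 : ¬ Q none)
    {i j : Idx S} (hi : Q i) (hj : Q j) : i = j := by
  rcases h with ⟨h, -⟩ | ⟨-, a₀, t₀, m₀, h1, h2⟩
  · exact absurd h h0
  · rcases i with _ | ⟨⟨a, ha⟩, t⟩ | ⟨⟨a, ha⟩, m⟩ <;>
      rcases j with _ | ⟨⟨b, hb⟩, s⟩ | ⟨⟨b, hb⟩, n⟩ <;> grind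

section lines
variable {K : Type*} [Field K]

lemma finrank_span_lineE_lineF (S : Finset K) (d : K) (i : Idx S) :
    Module.finrank K (Submodule.span K {lineE S i, lineF S d i}) = 2 := by
  have h : LinearIndependent K ![lineE S i, lineF S d i] := by
    rw [LinearIndependent.pair_iff]
    intro s t h
    have h0 := congrFun h 0
    have h1 := congrFun h 1
    have h2 := congrFun h 2
    have h3 := congrFun h 3
    rcases i with _ | ⟨a, u⟩ | ⟨a, _ | m⟩ <;> simp [lineE, lineF] at h0 h1 h2 h3 ⊢ <;> grind
  have := finrank_span_eq_card h
  rwa [Matrix.range_cons_cons_empty, Fintype.card_fin] at this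

lemma lineF_notMem {S : Finset K} {d : K} {j : Idx S} (hj : j ≠ none) :
    lineF S d j ∉ Submodule.span K {lineE S none, lineF S d none} := by
  rw [Submodule.mem_span_pair]
  rintro ⟨x, y, h⟩
  have h0 := congrFun h 0
  have h1 := congrFun h 1
  rcases j with _ | ⟨a, u⟩ | ⟨a, _ | m⟩ <;> simp [lineE, lineF] at h0 h1 hj

/-- The line of `PG(3,q)` with a given index. -/
def lineS (S : Finset K) (d : K) (i : Idx S) : PGLine K :=
  ⟨Submodule.span K {lineE S i, lineF S d i}, finrank_span_lineE_lineF S d i⟩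

/-- A point off `L` lies on at most one line of the construction, by `Pattern.eq_of`, so two lines
agree as soon as one of them contains a point off `L` of the other. -/
lemma lineS_injective {S : Finset K} {d : K} (h2 : (2 : K) = 0)
    (hd : ∀ x : K, x ^ 2 + x + d ≠ 0) : Function.Injective (lineS S d) := by
  have key : ∀ i j, j ≠ none → lineS S d i = lineS S d j → i = j := fun i j hj h => by
    have hn := lineF_notMem (d := d) hj
    have h' : Submodule.span K {lineE S i, lineF S d i} =
      Submodule.span K {lineE S j, lineF S d j} := congrArg Subtype.val h
    have hm : lineF S d j ∈ Submodule.span K {lineE S j, lineF S d j} :=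
      Submodule.subset_span (by simp)
    refine (pattern_point h2 hd fun h0 => hn ?_).eq_of hn (h' ▸ hm) hm
    rw [h0]; exact zero_mem _
  intro i j h
  by_cases hj : j = none
  · by_cases hi : i = none
    · rw [hi, hj]
    · exact (key j i hi h.symm).symm
  · exact key i j hj h

lemma pattern_lineS_point {S : Finset K} {d : K} (h2 : (2 : K) = 0)
    (hd : ∀ x : K, x ^ 2 + x + d ≠ 0) {P : Submodule K (Fin 4 → K)}
    (hP : Module.finrank K P = 1) : Pattern S (fun i => P ≤ (lineS S d i).1) := by
  obtain ⟨p, hp, rfl⟩ : ∃ p : Fin 4 → K, p ≠ 0 ∧ P = Submodule.span K {p} := by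
    obtain ⟨⟨p, hpP⟩, hp, -⟩ := finrank_eq_one_iff'.1 hP
    have hp' : p ≠ 0 := fun h => hp (Subtype.ext h)
    refine ⟨p, hp', (Submodule.eq_of_le_of_finrank_eq ?_ ?_).symm⟩
    · rwa [Submodule.span_singleton_le_iff_mem]
    · rw [hP, finrank_span_singleton hp']
  simpa only [Submodule.span_singleton_le_iff_mem, lineS] using pattern_point h2 hd hp

lemma pattern_lineS_plane {S : Finset K} {d : K} (h2 : (2 : K) = 0)
    (hd : ∀ x : K, x ^ 2 + x + d ≠ 0) {π : Submodule K (Fin 4 → K)}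
    (hπ : Module.finrank K π = 3) : Pattern S (fun i => (lineS S d i).1 ≤ π) := by
  obtain ⟨φ, hφ, rfl⟩ : ∃ φ : Module.Dual K (Fin 4 → K), φ ≠ 0 ∧ π = LinearMap.ker φ := by
    have hlt : π < ⊤ := by
      refine lt_top_iff_ne_top.2 ?_
      rintro rfl
      simp at hπ
    obtain ⟨φ, hφ, hle⟩ := Submodule.exists_le_ker_of_lt_top π hlt
    refine ⟨φ, hφ, Submodule.eq_of_le_of_finrank_eq hle ?_⟩
    have := Module.Dual.finrank_ker_add_one_of_ne_zero hφ
    rw [Module.finrank_fin_fun] at this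
    omega
  simpa [lineS, Submodule.span_le, Set.insert_subset_iff] using pattern_plane h2 hd hφ

lemma ncard_mem_range {α β : Type*} {f : α → β} (hf : Function.Injective f) (p : β → Prop) :
    {x | x ∈ Set.range f ∧ p x}.ncard = {i | p (f i)}.ncard := by
  rw [← Set.ncard_image_of_injective _ hf]
  congr 1
  ext x
  constructor
  · rintro ⟨⟨i, rfl⟩, h⟩; exact ⟨i, h, rfl⟩
  · rintro ⟨i, h, rfl⟩; exact ⟨⟨i, rfl⟩, h⟩

lemma ncard_range {α β : Type*} {f : α → β} (hf : Function.Injective f) :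
    (Set.range f).ncard = Nat.card α := by
  rw [← Set.image_univ, Set.ncard_image_of_injective _ hf, Set.ncard_univ]

/-- In characteristic two the map `x ↦ x² + x` takes the value `0` at both `0` and `1`, so on a
finite field it is not surjective; in other words some `X² + X + d` is irreducible. -/
lemma exists_irreducible_artinSchreier [Finite K] (h2 : (2 : K) = 0) :
    ∃ d : K, ∀ x : K, x ^ 2 + x + d ≠ 0 := by
  by_contra! h
  have hs : Function.Surjective (fun x : K => x ^ 2 + x) := fun y => by
    obtain ⟨x, hx⟩ := h (-y)
    exact ⟨x, by linear_combination hx⟩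
  have hinj := Finite.injective_iff_surjective.2 hs
  exact zero_ne_one (hinj (show (0 : K) ^ 2 + 0 = 1 ^ 2 + 1 by linear_combination -h2))

end lines

/-! ### Counting points of the Klein quadric -/

section quadricPoints
variable {K : Type*} [Field K]

lemma Q5Form_smul (c : K) (v : Fin 6 → K) : Q5Form K (c • v) = c ^ 2 * Q5Form K v := by
  simp only [Q5Form, Pi.smul_apply, smul_eq_mul]; ring

/-- The point of the Klein quadric spanned by a nonzero singular vector. -/
def Q5Point.mk' (v : Fin 6 → K) (hv : v ≠ 0) (hQ : Q5Form K v = 0) : Q5Point K :=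
  ⟨Submodule.span K {v}, finrank_span_singleton hv, fun w hw => by
    obtain ⟨c, rfl⟩ := Submodule.mem_span_singleton.1 hw
    rw [Q5Form_smul, hQ, mul_zero]⟩

lemma Q5Point.span_eq (P : Q5Point K) {v : Fin 6 → K} (hv : v ≠ 0) (hP : v ∈ P.1) :
    Submodule.span K {v} = P.1 := by
  refine Submodule.eq_of_le_of_finrank_eq ?_ ?_
  · rwa [Submodule.span_singleton_le_iff_mem]
  · rw [P.2.1, finrank_span_singleton hv]

variable [Fintype K]

instance : Finite (Q5Point K) :=
  inferInstanceAs (Finite {W : Submodule K (Fin 6 → K) //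
    Module.finrank K W = 1 ∧ ∀ v ∈ W, Q5Form K v = 0})

lemma card_ne_zero {V : Type*} [AddCommGroup V] [Finite V] :
    Nat.card {v : V // v ≠ 0} = Nat.card V - 1 := by
  have := Fintype.ofFinite V
  rw [Nat.card_eq_fintype_card, Fintype.card_subtype_compl, Fintype.card_subtype_eq,
    Nat.card_eq_fintype_card]

/-- Each point of the quadric consists of `q - 1` nonzero singular vectors, together with `0`. -/
lemma card_points_mul (T : Submodule K (Fin 6 → K)) :
    Nat.card {P : Q5Point K // P.1 ≤ T} * (Fintype.card K - 1) =
      Nat.card {v : Fin 6 → K // v ≠ 0 ∧ Q5Form K v = 0 ∧ v ∈ T} := by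
  have := Fintype.ofFinite {P : Q5Point K // P.1 ≤ T}
  let g : (Σ P : {P : Q5Point K // P.1 ≤ T}, {v : P.1.1 // v ≠ 0}) →
      {v : Fin 6 → K // v ≠ 0 ∧ Q5Form K v = 0 ∧ v ∈ T} := fun x =>
    ⟨x.2.1, fun h => x.2.2 (Subtype.ext h), x.1.1.2.2 _ x.2.1.2, x.1.2 x.2.1.2⟩
  have hg : Function.Bijective g := by
    constructor
    · rintro ⟨⟨P, hP⟩, ⟨⟨v, hvP⟩, hv⟩⟩ ⟨⟨P', hP'⟩, ⟨⟨v', hvP'⟩, hv'⟩⟩ h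
      obtain rfl : v = v' := congrArg Subtype.val h
      have hv0 : v ≠ 0 := fun h => hv (Subtype.ext h)
      obtain rfl : P = P' := Subtype.ext ((P.span_eq hv0 hvP).symm.trans (P'.span_eq hv0 hvP'))
      rfl
    · rintro ⟨v, hv, hQ, hT⟩
      exact ⟨⟨⟨.mk' v hv hQ, (Submodule.span_singleton_le_iff_mem _ _).2 hT⟩,
        ⟨⟨v, Submodule.mem_span_singleton_self v⟩, fun h => hv (congrArg Subtype.val h)⟩⟩, rfl⟩
  rw [← Nat.card_congr (Equiv.ofBijective g hg), Nat.card_sigma]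
  have : ∀ P : {P : Q5Point K // P.1 ≤ T},
      Nat.card {v : P.1.1 // v ≠ 0} = Fintype.card K - 1 := fun P => by
    rw [card_ne_zero, Module.natCard_eq_pow_finrank (K := K), P.1.2.1, pow_one,
      Nat.card_eq_fintype_card]
  rw [Finset.sum_congr rfl fun P _ => this P]
  simp [Nat.card_eq_fintype_card]

lemma card_points_generator {W : Submodule K (Fin 6 → K)} (hW : IsGenerator W) :
    Nat.card {P : Q5Point K // P.1 ≤ W} = Fintype.card K ^ 2 + Fintype.card K + 1 := by
  have h := card_points_mul W
  have e : Nat.card {v : Fin 6 → K // v ≠ 0 ∧ Q5Form K v = 0 ∧ v ∈ W} =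
      Fintype.card K ^ 3 - 1 := by
    rw [← Nat.card_eq_fintype_card (α := K), ← hW.1, ← Module.natCard_eq_pow_finrank (K := K),
      ← card_ne_zero]
    refine Nat.card_congr
      ⟨fun v => ⟨⟨v.1, v.2.2.2⟩, fun h => v.2.1 (congrArg Subtype.val h)⟩,
        fun v => ⟨v.1.1, fun h => v.2 (Subtype.ext h), hW.2 _ v.1.2, v.1.2⟩,
        fun _ => rfl, fun _ => rfl⟩
  rw [e] at h
  obtain ⟨r, hr⟩ : ∃ r, Fintype.card K = r + 2 :=
    Nat.exists_eq_add_of_le' (Fintype.one_lt_card (α := K))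
  rw [hr] at h ⊢
  refine Nat.eq_of_mul_eq_mul_right (show 0 < r + 2 - 1 by omega) (h.trans ?_)
  rw [Nat.sub_eq_iff_eq_add (Nat.one_le_pow _ _ (by omega))]
  simp only [Nat.add_succ_sub_one]
  ring

lemma card_dotProduct_eq_zero {u : Fin 3 → K} (hu : u ≠ 0) :
    Nat.card {w : Fin 3 → K // u ⬝ᵥ w = 0} = Fintype.card K ^ 2 := by
  let φ : Module.Dual K (Fin 3 → K) := dotProductEquiv K (Fin 3) u
  have hφ : φ ≠ 0 := by simpa [φ] using hu
  have h := Module.Dual.finrank_ker_add_one_of_ne_zero hφ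
  rw [Module.finrank_fin_fun] at h
  have h' : Module.finrank K (LinearMap.ker φ) = 2 := by omega
  rw [← h', ← Nat.card_eq_fintype_card, ← Module.natCard_eq_pow_finrank (K := K)]
  exact Nat.card_congr (Equiv.subtypeEquivRight fun w => by simp [φ])

/-- The number of singular vectors. The quadratic form is the dot product of `(x₀, x₂, x₄)` and
`(x₁, x₃, x₅)`, and a nonzero vector of `K³` is orthogonal to `q²` vectors. -/
lemma card_singular : Nat.card {v : Fin 6 → K // Q5Form K v = 0} =
    (Fintype.card K ^ 3 - 1) * Fintype.card K ^ 2 + Fintype.card K ^ 3 := by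
  let e : (Fin 6 → K) ≃ (Fin 3 → K) × (Fin 3 → K) :=
    ⟨fun v => (![v 0, v 2, v 4], ![v 1, v 3, v 5]),
      fun p => ![p.1 0, p.2 0, p.1 1, p.2 1, p.1 2, p.2 2],
      fun v => by ext j; fin_cases j <;> rfl,
      fun p => by
        refine Prod.ext ?_ ?_ <;> ext j <;> fin_cases j <;> rfl⟩
  have e1 : {v : Fin 6 → K // Q5Form K v = 0} ≃
      {p : (Fin 3 → K) × (Fin 3 → K) // p.1 ⬝ᵥ p.2 = 0} :=
    e.subtypeEquiv fun v => by simp [e, Q5Form, dotProduct, Fin.sum_univ_three]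
  rw [Nat.card_congr (e1.trans (Equiv.subtypeProdEquivSigmaSubtype fun u w => u ⬝ᵥ w = 0)),
    Nat.card_sigma, ← Finset.sum_erase_add _ _ (Finset.mem_univ 0)]
  rw [Finset.sum_congr rfl fun u hu => card_dotProduct_eq_zero (Finset.ne_of_mem_erase hu)]
  simp [Finset.card_erase_of_mem]

lemma card_Q5Point : Nat.card (Q5Point K) =
    (Fintype.card K ^ 2 + 1) * (Fintype.card K ^ 2 + Fintype.card K + 1) := by
  have h := card_points_mul (⊤ : Submodule K (Fin 6 → K))
  have e0 : Nat.card {P : Q5Point K // P.1 ≤ ⊤} = Nat.card (Q5Point K) :=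
    Nat.card_congr (Equiv.subtypeUnivEquiv fun _ => le_top)
  have e : Nat.card {v : Fin 6 → K // v ≠ 0 ∧ Q5Form K v = 0 ∧ v ∈ (⊤ : Submodule K _)} + 1 =
      Nat.card {v : Fin 6 → K // Q5Form K v = 0} := by
    have h0 : (0 : Fin 6 → K) ∈ {v | Q5Form K v = 0} := by simp [Q5Form]
    have h1 := Set.ncard_sdiff_singleton_add_one h0 (Set.toFinite _)
    rw [← Nat.card_coe_set_eq, ← Nat.card_coe_set_eq] at h1
    refine Eq.trans (congrArg (· + 1) (Nat.card_congr (Equiv.subtypeEquivRight fun v => ?_))) h1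
    simp [and_comm]
  rw [e0] at h
  rw [← h, card_singular] at e
  obtain ⟨r, hr⟩ : ∃ r, Fintype.card K = r + 2 :=
    Nat.exists_eq_add_of_le' (Fintype.one_lt_card (α := K))
  rw [hr] at e ⊢
  have h3 : (r + 2) ^ 3 - 1 = (r + 1) * ((r + 2) ^ 2 + (r + 2) + 1) := by
    rw [Nat.sub_eq_iff_eq_add (Nat.one_le_pow _ _ (by omega))]; ring
  refine Nat.eq_of_mul_eq_mul_right (show 0 < r + 1 by omega) ?_
  rw [h3, Nat.add_succ_sub_one] at e
  refine Nat.add_right_cancel (e.trans ?_)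
  ring

end quadricPoints

/-! ### The codeword -/

section code
variable {K : Type*} [Field K]

/-- The point of the Klein quadric which is the Klein image of the line with a given index. -/
def gpt (S : Finset K) (d : K) (h2 : (2 : K) = 0) (i : Idx S) : Q5Point K :=
  .mk' (kleinPt S d i) (kleinPt_ne_zero i) (kleinPt_singular h2 i)

lemma gpt_injective {S : Finset K} {d : K} (h2 : (2 : K) = 0) (hd : ∀ x : K, x ^ 2 + x + d ≠ 0) :
    Function.Injective (gpt S d h2) := fun i j h => by
  have hm : kleinPt S d j ∈ (gpt S d h2 i).1 := by
    rw [h]; exact Submodule.mem_span_singleton_self _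
  obtain ⟨c, hc⟩ := Submodule.mem_span_singleton.1 hm
  exact eq_of_kleinPt_smul hd hc.symm

lemma gpt_le_iff {S : Finset K} {d : K} {h2 : (2 : K) = 0} {i : Idx S}
    {W : Submodule K (Fin 6 → K)} : (gpt S d h2 i).1 ≤ W ↔ kleinPt S d i ∈ W :=
  Submodule.span_singleton_le_iff_mem _ _

/-- The sum over `A` of the characteristic function of the complement of `R`. -/
lemma finsum_mem_eq_ncard_sdiff {α : Type*} [Finite α] (A R : Set α) {c : α → ZMod 2}
    (hc0 : ∀ x ∈ R, c x = 0) (hc1 : ∀ x ∉ R, c x = 1) :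
    ∑ᶠ x ∈ A, c x = (A \ R).ncard := by
  have := Fintype.ofFinite α
  have hc : ∀ x ∈ A.toFinset, c x = if x ∈ R then 0 else 1 := fun x _ => by
    split_ifs with h
    exacts [hc0 x h, hc1 x h]
  rw [finsum_mem_eq_toFinset_sum, Finset.sum_congr rfl hc, Set.ncard_eq_toFinset_card',
    Finset.sum_ite, Finset.sum_const_zero, zero_add, Finset.sum_const, nsmul_one]
  congr 2
  ext x
  simp

end code

/-- For `q` even and `0 ≤ 2i ≤ q` there is a set of `q² + 1 + 2i` lines of `PG(3,q)` such
that every point lies on an odd number of its lines and every plane contains an odd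
number of its lines; consequently the dual binary code of points and planes of `Q⁺(5,q)`
has a codeword of weight `(1+q²)(q²+q) - 2i`. -/
theorem odd_line_sets_and_large_weight_codewords (q i : ℕ)
    (hq : Fintype.card F = q) (hqe : Even q) (hi : 2 * i ≤ q) :
    (∃ SL : Set (PGLine F), SL.ncard = q ^ 2 + 1 + 2 * i ∧
      (∀ P : PGPoint F, Odd (Set.ncard {L | L ∈ SL ∧ P.1 ≤ L.1})) ∧
      (∀ π : PGPlane F, Odd (Set.ncard {L | L ∈ SL ∧ L.1 ≤ π.1}))) ∧
    (∃ c : Q5Point F → ZMod 2,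
      (∀ π : Q5Plane F, ∑ᶠ P ∈ {P : Q5Point F | P.1 ≤ π.1}, c P = 0) ∧
      Set.ncard {P : Q5Point F | c P ≠ 0} = (1 + q ^ 2) * (q ^ 2 + q) - 2 * i) := by
  have h2 : (2 : F) = 0 := by
    have : ringChar F = 2 := FiniteField.even_card_iff_char_two.2 (Nat.even_iff.1 (hq ▸ hqe))
    have h := ringChar.Nat.cast_ringChar (R := F)
    rw [this] at h
    exact_mod_cast h
  obtain ⟨d, hd⟩ := exists_irreducible_artinSchreier h2
  obtain ⟨S, -, hS⟩ := Finset.exists_subset_card_eq (s := (Finset.univ : Finset F)) (n := 2 * i)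
    (by rwa [Finset.card_univ, hq])
  have hSe : Even S.card := hS ▸ even_two_mul i
  have hcard : Nat.card (Idx S) = q ^ 2 + 1 + 2 * i := by rw [card_idx, hq, hS]
  constructor
  · have hinj := lineS_injective (S := S) h2 hd
    refine ⟨Set.range (lineS S d), ?_, fun P => ?_, fun π => ?_⟩
    · rw [ncard_range hinj, hcard]
    · exact (ncard_mem_range hinj (fun L => P.1 ≤ L.1)).symm ▸
        (pattern_lineS_point h2 hd P.2).odd_ncard hSe
    · exact (ncard_mem_range hinj (fun L => L.1 ≤ π.1)).symm ▸
        (pattern_lineS_plane h2 hd π.2).odd_ncard hSe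
  · have hinj := gpt_injective (S := S) h2 hd
    set R := Set.range (gpt S d h2) with hR
    refine ⟨fun P => if P ∈ R then 0 else 1, fun π => ?_, ?_⟩
    · have hW : IsGenerator π.1 := π.2
      refine (finsum_mem_eq_ncard_sdiff _ R (fun P h => if_pos h) fun P h => if_neg h).trans
        (ZMod.natCast_eq_zero_iff_even.2 ?_)
      have h1 : Odd ({P : Q5Point F | P.1 ≤ π.1}).ncard := by
        have : ({P : Q5Point F | P.1 ≤ π.1}).ncard = q ^ 2 + q + 1 := by
          rw [← hq, ← card_points_generator hW]; exact (Nat.card_coe_set_eq _).symm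
        rw [this]
        exact ((hqe.pow_of_ne_zero two_ne_zero).add hqe).add_one
      have h3 : Odd ({P : Q5Point F | P.1 ≤ π.1} ∩ R).ncard := by
        rw [Set.inter_comm]
        have := ncard_mem_range hinj (fun P => P.1 ≤ π.1)
        simp only [gpt_le_iff] at this
        exact this.symm ▸ (pattern_generator h2 hd hW).odd_ncard hSe
      have h4 := Set.ncard_inter_add_ncard_sdiff_eq_ncard {P : Q5Point F | P.1 ≤ π.1} R
      rw [← h4] at h1
      grind
    · have hc : {P : Q5Point F | (if P ∈ R then (0 : ZMod 2) else 1) ≠ 0} = Rᶜ := by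
        ext P; simp
      have h1 : R.ncard = q ^ 2 + 1 + 2 * i := by
        rw [hR, ncard_range hinj, hcard]
      have h3 := Set.ncard_add_ncard_compl R
      rw [h1, card_Q5Point, hq] at h3
      rw [hc]
      refine Nat.eq_sub_of_add_eq (Nat.add_left_cancel (n := q ^ 2 + 1) ?_)
      linarith
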